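/- Let n ≥ 3 be an integer and G(u) = u²/2 - (n/(2n-4)) u^(2-4/n) + 1/(n-2). For each c with 0 < c < 1/(n-2) let a(c), b(c) be the unique reals with 0 < a(c) < 1 < b(c) and G(a(c)) = G(b(c)) = c, and define T(c) = √2 · ∫_{a(c)}^{b(c)} du/√(c - G(u)). Then T(c) tends to π√n as c tends to 0 from the right. -/

import Mathlib

open Real Filter

/-- The antiderivative `G(u) = u²/2 - (n/(2n-4)) u^(2-4/n) + 1/(n-2)` of
`g(u) = u - u^(1-4/n)` vanishing at `u = 1`. -/
noncomputable def derdzG (n : ℕ) (u : ℝ) : ℝ :=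
  u ^ 2 / 2 - ((n : ℝ) / (2 * (n : ℝ) - 4)) * u ^ (2 - 4 / (n : ℝ)) + 1 / ((n : ℝ) - 2)

open Set MeasureTheory Topology

/-!
Let `x₀` be a critical point of a potential `V` with `κ = V''(x₀) > 0`. Cauchy's mean value theorem,
applied to `V` and `u ↦ (u - x₀) ^ 2`, writes `V v - V u` as
`V'(ξ) / (2 * (ξ - x₀)) * ((v - x₀) ^ 2 - (u - x₀) ^ 2)`, and the first factor tends to `κ / 2`
as `v → x₀`. The integral of `1 / √(V v - V u)` from `x₀` to `v` is therefore squeezed between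
multiples of the one for the harmonic oscillator, which is an arcsine. Reflecting `V` treats the
other side of the well, and the two halves add up, after the factor `√2`, to the harmonic period
`2π / √κ`; here `κ = 4 / n`.
-/

section HarmonicOscillator

variable {a b : ℝ}

theorem sq_sub_sq_pos_of_mem_Ioo {u : ℝ} (hu : u ∈ Ioo a b) : 0 < (b - a) ^ 2 - (u - a) ^ 2 := by
  nlinarith [hu.1, hu.2]

theorem hasDerivAt_arcsin_sub_div_sub {u : ℝ} (hu : u ∈ Ioo a b) :
    HasDerivAt (fun u ↦ arcsin ((u - a) / (b - a))) (1 / √((b - a) ^ 2 - (u - a) ^ 2)) u := by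
  have hab : 0 < b - a := sub_pos.2 (hu.1.trans hu.2)
  have hlt : (u - a) / (b - a) < 1 := (div_lt_one hab).2 (by linarith [hu.2])
  have hpos : 0 < (u - a) / (b - a) := div_pos (sub_pos.2 hu.1) hab
  have hinner : HasDerivAt (fun u ↦ (u - a) / (b - a)) (1 / (b - a)) u :=
    ((hasDerivAt_id u).sub_const a).div_const (b - a)
  refine ((hasDerivAt_arcsin (by linarith) hlt.ne).comp u hinner).congr_deriv ?_
  have hscale : (b - a) ^ 2 - (u - a) ^ 2 = (1 - ((u - a) / (b - a)) ^ 2) * (b - a) ^ 2 := by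
    field_simp
  rw [hscale, sqrt_mul' _ (sq_nonneg _), sqrt_sq hab.le, one_div_mul_one_div]

theorem intervalIntegrable_one_div_sqrt_sq_sub_sq (hab : a < b) :
    IntervalIntegrable (fun u ↦ 1 / √((b - a) ^ 2 - (u - a) ^ 2)) volume a b := by
  rw [intervalIntegrable_iff_integrableOn_Ioc_of_le hab.le]
  exact intervalIntegral.integrableOn_deriv_of_nonneg (by fun_prop)
    (fun u hu ↦ hasDerivAt_arcsin_sub_div_sub hu) (fun u _ ↦ by positivity)

theorem integral_one_div_sqrt_sq_sub_sq (hab : a < b) :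
    ∫ u in a..b, 1 / √((b - a) ^ 2 - (u - a) ^ 2) = π / 2 := by
  rw [intervalIntegral.integral_eq_sub_of_hasDerivAt_of_le hab.le (by fun_prop)
    (fun u hu ↦ hasDerivAt_arcsin_sub_div_sub hu) (intervalIntegrable_one_div_sqrt_sq_sub_sq hab)]
  simp [div_self (sub_pos.2 hab).ne']

theorem one_div_sqrt_le_of_mul_le {m q y : ℝ} (hm : 0 < m) (hq : 0 < q) (h : m * q ≤ y) :
    1 / √y ≤ 1 / √m * (1 / √q) := by
  rw [one_div_mul_one_div, ← sqrt_mul hm.le]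
  exact one_div_le_one_div_of_le (sqrt_pos.2 (mul_pos hm hq)) (sqrt_le_sqrt h)

theorem le_one_div_sqrt_of_le_mul {M q y : ℝ} (hq : 0 ≤ q) (hy : 0 < y) (h : y ≤ M * q) :
    1 / √M * (1 / √q) ≤ 1 / √y := by
  rw [one_div_mul_one_div, ← sqrt_mul' _ hq]
  exact one_div_le_one_div_of_le (sqrt_pos.2 hy) (sqrt_le_sqrt h)

variable {φ : ℝ → ℝ} {m M : ℝ}

theorem intervalIntegrable_one_div_sqrt_of_mul_sq_sub_sq_le (hab : a < b) (hm : 0 < m)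
    (hφ : AEStronglyMeasurable φ (volume.restrict (Ioo a b)))
    (h : ∀ u ∈ Ioo a b, m * ((b - a) ^ 2 - (u - a) ^ 2) ≤ φ u) :
    IntervalIntegrable (fun u ↦ 1 / √(φ u)) volume a b := by
  have hdom := (intervalIntegrable_one_div_sqrt_sq_sub_sq hab).const_mul (1 / √m)
  rw [intervalIntegrable_iff_integrableOn_Ioo_of_le hab.le] at hdom ⊢
  refine Integrable.mono' hdom (hφ.aemeasurable.sqrt.const_div 1).aestronglyMeasurable ?_
  refine ae_restrict_of_forall_mem measurableSet_Ioo fun u hu ↦ ?_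
  rw [norm_of_nonneg (by positivity)]
  exact one_div_sqrt_le_of_mul_le hm (sq_sub_sq_pos_of_mem_Ioo hu) (h u hu)

theorem integral_one_div_sqrt_le_of_mul_sq_sub_sq_le (hab : a < b) (hm : 0 < m)
    (hφ : AEStronglyMeasurable φ (volume.restrict (Ioo a b)))
    (h : ∀ u ∈ Ioo a b, m * ((b - a) ^ 2 - (u - a) ^ 2) ≤ φ u) :
    ∫ u in a..b, 1 / √(φ u) ≤ 1 / √m * (π / 2) := by
  rw [← integral_one_div_sqrt_sq_sub_sq hab, ← intervalIntegral.integral_const_mul]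
  exact intervalIntegral.integral_mono_on_of_le_Ioo hab.le
    (intervalIntegrable_one_div_sqrt_of_mul_sq_sub_sq_le hab hm hφ h)
    ((intervalIntegrable_one_div_sqrt_sq_sub_sq hab).const_mul _)
    (fun u hu ↦ one_div_sqrt_le_of_mul_le hm (sq_sub_sq_pos_of_mem_Ioo hu) (h u hu))

theorem le_integral_one_div_sqrt_of_le_mul_sq_sub_sq (hab : a < b)
    (hφ : IntervalIntegrable (fun u ↦ 1 / √(φ u)) volume a b) (hpos : ∀ u ∈ Ioo a b, 0 < φ u)
    (h : ∀ u ∈ Ioo a b, φ u ≤ M * ((b - a) ^ 2 - (u - a) ^ 2)) :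
    1 / √M * (π / 2) ≤ ∫ u in a..b, 1 / √(φ u) := by
  rw [← integral_one_div_sqrt_sq_sub_sq hab, ← intervalIntegral.integral_const_mul]
  exact intervalIntegral.integral_mono_on_of_le_Ioo hab.le
    ((intervalIntegrable_one_div_sqrt_sq_sub_sq hab).const_mul _) hφ
    (fun u hu ↦ le_one_div_sqrt_of_le_mul (sq_sub_sq_pos_of_mem_Ioo hu).le (hpos u hu) (h u hu))

end HarmonicOscillator

section PotentialWell

variable {V : ℝ → ℝ} {x₀ : ℝ}

theorem exists_sub_eq_deriv_div_mul_sq_sub_sq {u v : ℝ} (hu : x₀ ≤ u) (huv : u < v)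
    (hc : ContinuousOn V (Icc u v)) (hd : DifferentiableOn ℝ V (Ioo u v)) :
    ∃ ξ ∈ Ioo u v,
      V v - V u = deriv V ξ / (2 * (ξ - x₀)) * ((v - x₀) ^ 2 - (u - x₀) ^ 2) := by
  obtain ⟨ξ, hξ, h⟩ := exists_ratio_deriv_eq_ratio_slope V huv hc hd (fun u ↦ (u - x₀) ^ 2)
    (by fun_prop) (by fun_prop)
  have hsq : deriv (fun u ↦ (u - x₀) ^ 2) ξ = 2 * (ξ - x₀) := by simp
  have hne : ξ - x₀ ≠ 0 := (sub_pos.2 (hu.trans_lt hξ.1)).ne'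
  refine ⟨ξ, hξ, ?_⟩
  rw [hsq] at h
  field_simp
  linarith

theorem tendsto_deriv_div_two_mul_sub (h₀ : deriv V x₀ = 0)
    (h₂ : DifferentiableAt ℝ (deriv V) x₀) :
    Tendsto (fun ξ ↦ deriv V ξ / (2 * (ξ - x₀))) (𝓝[≠] x₀) (𝓝 (deriv (deriv V) x₀ / 2)) := by
  refine ((hasDerivAt_iff_tendsto_slope.1 h₂.hasDerivAt).div_const 2).congr fun ξ ↦ ?_
  rw [slope_def_field, h₀, sub_zero, div_div, mul_comm]

theorem eventually_nhdsGT_forall_mem_Ioc {X : Type*} [LinearOrder X] [TopologicalSpace X]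
    [OrderTopology X] [NoMaxOrder X] {a : X} {p : X → Prop} (h : ∀ᶠ x in 𝓝[>] a, p x) :
    ∀ᶠ v in 𝓝[>] a, ∀ x ∈ Ioc a v, p x := by
  obtain ⟨r, hr, hp⟩ := (nhdsGT_basis a).eventually_iff.1 h
  filter_upwards [Ioo_mem_nhdsGT hr] with v hv x hx using hp ⟨hx.1, hx.2.trans_lt hv.2⟩

theorem eventually_differentiableOn_Ioc (h₂ : deriv (deriv V) x₀ ≠ 0) :
    ∀ᶠ v in 𝓝[>] x₀, DifferentiableOn ℝ V (Ioc x₀ v) := by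
  have hne : ∀ᶠ ξ in 𝓝[≠] x₀, deriv V ξ ≠ 0 :=
    (differentiableAt_of_deriv_ne_zero h₂).hasDerivAt.eventually_ne h₂
  filter_upwards [eventually_nhdsGT_forall_mem_Ioc (hne.filter_mono (nhdsGT_le_nhdsNE x₀))]
    with v hv ξ hξ
  exact (differentiableAt_of_deriv_ne_zero (hv ξ hξ)).differentiableWithinAt

variable {m M : ℝ}

theorem eventually_mul_sq_sub_sq_le_sub_le (h₀ : deriv V x₀ = 0) (h₂ : deriv (deriv V) x₀ ≠ 0)
    (hmV : m < deriv (deriv V) x₀ / 2) (hVM : deriv (deriv V) x₀ / 2 < M) :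
    ∀ᶠ v in 𝓝[>] x₀, ∀ u ∈ Ioo x₀ v,
      m * ((v - x₀) ^ 2 - (u - x₀) ^ 2) ≤ V v - V u ∧
      V v - V u ≤ M * ((v - x₀) ^ 2 - (u - x₀) ^ 2) := by
  have hratio : ∀ᶠ ξ in 𝓝[>] x₀, deriv V ξ / (2 * (ξ - x₀)) ∈ Ioo m M :=
    ((tendsto_deriv_div_two_mul_sub h₀ (differentiableAt_of_deriv_ne_zero h₂)).eventually
      (Ioo_mem_nhds hmV hVM)).filter_mono (nhdsGT_le_nhdsNE x₀)
  filter_upwards [eventually_differentiableOn_Ioc h₂, eventually_nhdsGT_forall_mem_Ioc hratio]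
    with v hdiff hratio u hu
  obtain ⟨ξ, hξ, heq⟩ := exists_sub_eq_deriv_div_mul_sq_sub_sq hu.1.le hu.2
    (hdiff.continuousOn.mono fun x hx ↦ ⟨hu.1.trans_le hx.1, hx.2⟩)
    (hdiff.mono fun x hx ↦ ⟨hu.1.trans hx.1, hx.2.le⟩)
  obtain ⟨hmξ, hξM⟩ := hratio ξ ⟨hu.1.trans hξ.1, hξ.2.le⟩
  have hpos := (sq_sub_sq_pos_of_mem_Ioo hu).le
  rw [heq]
  exact ⟨mul_le_mul_of_nonneg_right hmξ.le hpos, mul_le_mul_of_nonneg_right hξM.le hpos⟩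

theorem eventually_integral_one_div_sqrt_sub_mem_Icc (h₀ : deriv V x₀ = 0) (hm : 0 < m)
    (hmV : m < deriv (deriv V) x₀ / 2) (hVM : deriv (deriv V) x₀ / 2 < M) :
    ∀ᶠ v in 𝓝[>] x₀, IntervalIntegrable (fun u ↦ 1 / √(V v - V u)) volume x₀ v ∧
      ∫ u in x₀..v, 1 / √(V v - V u) ∈ Icc (1 / √M * (π / 2)) (1 / √m * (π / 2)) := by
  have h₂ : deriv (deriv V) x₀ ≠ 0 := by linarith
  filter_upwards [eventually_differentiableOn_Ioc h₂,
    eventually_mul_sq_sub_sq_le_sub_le h₀ h₂ hmV hVM, self_mem_nhdsWithin] with v hdiff hbound hv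
  have hmeas : AEStronglyMeasurable (fun u ↦ V v - V u) (volume.restrict (Ioo x₀ v)) :=
    (continuousOn_const.sub (hdiff.continuousOn.mono Ioo_subset_Ioc_self)).aestronglyMeasurable
      measurableSet_Ioo
  have hle : ∀ u ∈ Ioo x₀ v, m * ((v - x₀) ^ 2 - (u - x₀) ^ 2) ≤ V v - V u :=
    fun u hu ↦ (hbound u hu).1
  have hpos : ∀ u ∈ Ioo x₀ v, 0 < V v - V u :=
    fun u hu ↦ (mul_pos hm (sq_sub_sq_pos_of_mem_Ioo hu)).trans_le (hle u hu)
  have hint := intervalIntegrable_one_div_sqrt_of_mul_sq_sub_sq_le hv hm hmeas hle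
  exact ⟨hint,
    le_integral_one_div_sqrt_of_le_mul_sq_sub_sq hv hint hpos (fun u hu ↦ (hbound u hu).2),
    integral_one_div_sqrt_le_of_mul_sq_sub_sq_le hv hm hmeas hle⟩

theorem eventually_nhdsGT_intervalIntegrable_one_div_sqrt_sub (h₀ : deriv V x₀ = 0)
    (h₂ : 0 < deriv (deriv V) x₀) :
    ∀ᶠ v in 𝓝[>] x₀, IntervalIntegrable (fun u ↦ 1 / √(V v - V u)) volume x₀ v :=
  (eventually_integral_one_div_sqrt_sub_mem_Icc h₀ (div_pos h₂ four_pos) (by linarith)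
    (lt_add_one _)).mono fun _ h ↦ h.1

theorem tendsto_nhdsGT_integral_one_div_sqrt_sub (h₀ : deriv V x₀ = 0)
    (h₂ : 0 < deriv (deriv V) x₀) :
    Tendsto (fun v ↦ ∫ u in x₀..v, 1 / √(V v - V u)) (𝓝[>] x₀)
      (𝓝 (1 / √(deriv (deriv V) x₀ / 2) * (π / 2))) := by
  set k := deriv (deriv V) x₀ / 2
  have hkpos : 0 < k := half_pos h₂
  have hcont : Tendsto (fun t ↦ 1 / √t * (π / 2)) (𝓝 k) (𝓝 (1 / √k * (π / 2))) :=
    (continuousAt_const.div continuous_sqrt.continuousAt (sqrt_pos.2 hkpos).ne').mul_const _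
  refine tendsto_order.2 ⟨fun y hy ↦ ?_, fun y hy ↦ ?_⟩
  · obtain ⟨M, hyM, hkM⟩ := (((hcont.mono_left nhdsWithin_le_nhds).eventually
      (lt_mem_nhds hy)).and (self_mem_nhdsWithin (s := Ioi k))).exists
    filter_upwards [eventually_integral_one_div_sqrt_sub_mem_Icc h₀ (half_pos hkpos)
      (half_lt_self hkpos) hkM] with v hv
    exact hyM.trans_le hv.2.1
  · obtain ⟨m, hmy, hm⟩ := (((hcont.mono_left nhdsWithin_le_nhds).eventually
      (gt_mem_nhds hy)).and (Ioo_mem_nhdsLT hkpos)).exists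
    filter_upwards [eventually_integral_one_div_sqrt_sub_mem_Icc h₀ hm.1 hm.2 (lt_add_one k)]
      with v hv
    exact hv.2.2.trans_lt hmy

theorem deriv_deriv_comp_neg {𝕜 F : Type*} [NontriviallyNormedField 𝕜] [NormedAddCommGroup F]
    [NormedSpace 𝕜 F] (f : 𝕜 → F) (x : 𝕜) :
    deriv (deriv fun u ↦ f (-u)) x = deriv (deriv f) (-x) := by
  have h : (deriv fun u ↦ f (-u)) = fun u ↦ -deriv f (-u) := funext fun u ↦ deriv_comp_neg f u
  rw [h, deriv.fun_neg, deriv_comp_neg, neg_neg]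

theorem eventually_nhdsLT_intervalIntegrable_one_div_sqrt_sub (h₀ : deriv V x₀ = 0)
    (h₂ : 0 < deriv (deriv V) x₀) :
    ∀ᶠ v in 𝓝[<] x₀, IntervalIntegrable (fun u ↦ 1 / √(V v - V u)) volume v x₀ := by
  have h := tendsto_neg_nhdsLT.eventually <| eventually_nhdsGT_intervalIntegrable_one_div_sqrt_sub
    (V := fun u ↦ V (-u)) (x₀ := -x₀) (by simp [deriv_comp_neg, h₀])
    (by simpa [deriv_deriv_comp_neg] using h₂)
  filter_upwards [h] with v hv
  simpa using ((IntervalIntegrable.iff_comp_neg (by simp)).1 hv).symm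

theorem tendsto_nhdsLT_integral_one_div_sqrt_sub (h₀ : deriv V x₀ = 0)
    (h₂ : 0 < deriv (deriv V) x₀) :
    Tendsto (fun v ↦ ∫ u in v..x₀, 1 / √(V v - V u)) (𝓝[<] x₀)
      (𝓝 (1 / √(deriv (deriv V) x₀ / 2) * (π / 2))) := by
  have h := (tendsto_nhdsGT_integral_one_div_sqrt_sub
    (V := fun u ↦ V (-u)) (x₀ := -x₀) (by simp [deriv_comp_neg, h₀])
    (by simpa [deriv_deriv_comp_neg] using h₂)).comp tendsto_neg_nhdsLT
  rw [deriv_deriv_comp_neg, neg_neg] at h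
  refine h.congr fun v ↦ ?_
  simpa using intervalIntegral.integral_comp_neg (a := -x₀) (b := -v) fun u ↦ 1 / √(V v - V u)

theorem sqrt_two_mul_add_self_eq_two_pi_div_sqrt (κ : ℝ) :
    √2 * (1 / √(κ / 2) * (π / 2) + 1 / √(κ / 2) * (π / 2)) = 2 * π / √κ := by
  rw [sqrt_div' _ zero_le_two, one_div_div]
  linear_combination π / √κ * sq_sqrt (zero_le_two (α := ℝ))

theorem tendsto_period_of_deriv_deriv_pos {ι : Type*} {l : Filter ι} {α β E : ι → ℝ}
    (h₀ : deriv V x₀ = 0) (h₂ : 0 < deriv (deriv V) x₀)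
    (hα : Tendsto α l (𝓝[<] x₀)) (hβ : Tendsto β l (𝓝[>] x₀))
    (hVα : ∀ᶠ i in l, V (α i) = E i) (hVβ : ∀ᶠ i in l, V (β i) = E i) :
    Tendsto (fun i ↦ √2 * ∫ u in α i..β i, 1 / √(E i - V u)) l
      (𝓝 (2 * π / √(deriv (deriv V) x₀))) := by
  have hsum := (((tendsto_nhdsLT_integral_one_div_sqrt_sub h₀ h₂).comp hα).add
    ((tendsto_nhdsGT_integral_one_div_sqrt_sub h₀ h₂).comp hβ)).const_mul √2
  rw [sqrt_two_mul_add_self_eq_two_pi_div_sqrt] at hsum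
  refine hsum.congr' ?_
  filter_upwards [hVα, hVβ,
    hα.eventually (eventually_nhdsLT_intervalIntegrable_one_div_sqrt_sub h₀ h₂),
    hβ.eventually (eventually_nhdsGT_intervalIntegrable_one_div_sqrt_sub h₀ h₂)]
    with i hVα hVβ hαint hβint
  simp only [Function.comp_apply, hVα, hVβ] at hαint hβint ⊢
  rw [intervalIntegral.integral_add_adjacent_intervals hαint hβint]

end PotentialWell

section StrictMono

variable {ι X Y : Type*} [LinearOrder X] [TopologicalSpace X] [OrderTopology X] [DenselyOrdered X]
  [LinearOrder Y] [TopologicalSpace Y] [OrderTopology Y] {F : X → Y} {s : Set X} {x₀ : X}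
  {l : Filter ι} {β : ι → X}

theorem tendsto_nhdsGT_of_strictMonoOn (hF : StrictMonoOn F s) (hx₀ : x₀ ∈ s) (hs : s ∈ 𝓝[>] x₀)
    (hβs : ∀ᶠ i in l, β i ∈ s) (hβ : ∀ᶠ i in l, x₀ < β i)
    (hFβ : Tendsto (fun i ↦ F (β i)) l (𝓝 (F x₀))) : Tendsto β l (𝓝[>] x₀) := by
  refine tendsto_nhdsWithin_iff.2 ⟨tendsto_order.2 ⟨fun y hy ↦ ?_, fun y hy ↦ ?_⟩, hβ⟩
  · exact hβ.mono fun i hi ↦ hy.trans hi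
  · have : (𝓝[>] x₀).NeBot := nhdsGT_neBot_of_exists_gt ⟨y, hy⟩
    obtain ⟨z, hzs, hx₀z, hzy⟩ := Filter.nonempty_of_mem (inter_mem hs (Ioo_mem_nhdsGT hy))
    filter_upwards [hFβ.eventually (gt_mem_nhds (hF hx₀ hzs hx₀z)), hβs] with i hi his
    exact ((hF.lt_iff_lt his hzs).1 hi).trans hzy

theorem tendsto_nhdsLT_of_strictAntiOn (hF : StrictAntiOn F s) (hx₀ : x₀ ∈ s) (hs : s ∈ 𝓝[<] x₀)
    (hβs : ∀ᶠ i in l, β i ∈ s) (hβ : ∀ᶠ i in l, β i < x₀)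
    (hFβ : Tendsto (fun i ↦ F (β i)) l (𝓝 (F x₀))) : Tendsto β l (𝓝[<] x₀) :=
  tendsto_nhdsGT_of_strictMonoOn (X := Xᵒᵈ) hF.dual_left hx₀ hs hβs hβ hFβ

end StrictMono

section DerdzPotential

variable {n : ℕ} {u : ℝ}

theorem derdzG_one (hn₂ : n ≠ 2) : derdzG n 1 = 0 := by
  have h₂ : (n : ℝ) - 2 ≠ 0 := sub_ne_zero.2 (by exact_mod_cast hn₂)
  have hfactor : 2 * (n : ℝ) - 4 = 2 * (n - 2) := by ring
  rw [derdzG, one_rpow, hfactor]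
  field_simp
  ring

theorem hasDerivAt_derdzG (hn₀ : n ≠ 0) (hn₂ : n ≠ 2) (hu : u ≠ 0) :
    HasDerivAt (derdzG n) (u - u ^ (1 - 4 / (n : ℝ))) u := by
  have h₀ : (n : ℝ) ≠ 0 := by exact_mod_cast hn₀
  have h₂ : (n : ℝ) - 2 ≠ 0 := sub_ne_zero.2 (by exact_mod_cast hn₂)
  have hcoeff : (n : ℝ) / (2 * n - 4) * (2 - 4 / n) = 1 := by
    have hfactor : 2 * (n : ℝ) - 4 = 2 * (n - 2) := by ring
    rw [hfactor]
    field_simp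
    ring
  have hexp : 2 - 4 / (n : ℝ) - 1 = 1 - 4 / n := by ring
  have hsq : HasDerivAt (fun u : ℝ ↦ u ^ 2 / 2) u u := by
    simpa using ((hasDerivAt_id u).pow 2).div_const 2
  have hrpow := (hasDerivAt_rpow_const (p := 2 - 4 / (n : ℝ)) (Or.inl hu)).const_mul
    ((n : ℝ) / (2 * n - 4))
  rw [hexp, ← mul_assoc, hcoeff, one_mul] at hrpow
  exact (hsq.sub hrpow).add_const _

theorem deriv_derdzG (hn₀ : n ≠ 0) (hn₂ : n ≠ 2) (hu : u ≠ 0) :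
    deriv (derdzG n) u = u - u ^ (1 - 4 / (n : ℝ)) :=
  (hasDerivAt_derdzG hn₀ hn₂ hu).deriv

theorem deriv_derdzG_one (hn₀ : n ≠ 0) (hn₂ : n ≠ 2) : deriv (derdzG n) 1 = 0 := by
  rw [deriv_derdzG hn₀ hn₂ one_ne_zero, one_rpow, sub_self]

theorem deriv_deriv_derdzG_one (hn₀ : n ≠ 0) (hn₂ : n ≠ 2) :
    deriv (deriv (derdzG n)) 1 = 4 / n := by
  have hderiv : deriv (derdzG n) =ᶠ[𝓝 1] fun u ↦ u - u ^ (1 - 4 / (n : ℝ)) := by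
    filter_upwards [isOpen_ne.mem_nhds one_ne_zero] with u hu using deriv_derdzG hn₀ hn₂ hu
  have hforce : HasDerivAt (fun u : ℝ ↦ u - u ^ (1 - 4 / (n : ℝ))) (4 / n) 1 := by
    simpa using (hasDerivAt_id' (1 : ℝ)).fun_sub
      (hasDerivAt_rpow_const (p := 1 - 4 / (n : ℝ)) (Or.inl one_ne_zero))
  rw [hderiv.deriv_eq, hforce.deriv]

theorem strictMonoOn_derdzG (hn₀ : n ≠ 0) (hn₂ : n ≠ 2) : StrictMonoOn (derdzG n) (Ici 1) := by
  refine strictMonoOn_of_deriv_pos (convex_Ici 1) (fun u hu ↦ ?_) fun u hu ↦ ?_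
  · exact (hasDerivAt_derdzG hn₀ hn₂
      (one_pos.trans_le hu).ne').continuousAt.continuousWithinAt
  · rw [interior_Ici] at hu
    have hexp : 1 - 4 / (n : ℝ) < 1 := sub_lt_self 1 (by positivity)
    rw [deriv_derdzG hn₀ hn₂ (one_pos.trans hu).ne', sub_pos]
    simpa using rpow_lt_rpow_of_exponent_lt hu hexp

theorem strictAntiOn_derdzG (hn₀ : n ≠ 0) (hn₂ : n ≠ 2) : StrictAntiOn (derdzG n) (Ioc 0 1) := by
  refine strictAntiOn_of_deriv_neg (convex_Ioc 0 1) (fun u hu ↦ ?_) fun u hu ↦ ?_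
  · exact (hasDerivAt_derdzG hn₀ hn₂ hu.1.ne').continuousAt.continuousWithinAt
  · rw [interior_Ioc] at hu
    have hexp : 1 - 4 / (n : ℝ) < 1 := sub_lt_self 1 (by positivity)
    rw [deriv_derdzG hn₀ hn₂ hu.1.ne', sub_neg]
    simpa using rpow_lt_rpow_of_exponent_gt hu.1 hu.2 hexp

variable {ι : Type*} {l : Filter ι} {α : ι → ℝ}

theorem tendsto_nhdsLT_one_of_tendsto_derdzG (hn₀ : n ≠ 0) (hn₂ : n ≠ 2)
    (hpos : ∀ᶠ i in l, 0 < α i) (hlt : ∀ᶠ i in l, α i < 1)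
    (hG : Tendsto (fun i ↦ derdzG n (α i)) l (𝓝 0)) : Tendsto α l (𝓝[<] 1) :=
  tendsto_nhdsLT_of_strictAntiOn (strictAntiOn_derdzG hn₀ hn₂) ⟨one_pos, le_rfl⟩
    (Ioc_mem_nhdsLT one_pos) (hpos.and (hlt.mono fun _ ↦ le_of_lt)) hlt (by rwa [derdzG_one hn₂])

theorem tendsto_nhdsGT_one_of_tendsto_derdzG (hn₀ : n ≠ 0) (hn₂ : n ≠ 2)
    (hgt : ∀ᶠ i in l, 1 < α i) (hG : Tendsto (fun i ↦ derdzG n (α i)) l (𝓝 0)) :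
    Tendsto α l (𝓝[>] 1) :=
  tendsto_nhdsGT_of_strictMonoOn (strictMonoOn_derdzG hn₀ hn₂) self_mem_Ici
    (mem_of_superset self_mem_nhdsWithin Ioi_subset_Ici_self) (hgt.mono fun _ ↦ le_of_lt) hgt
    (by rwa [derdzG_one hn₂])

end DerdzPotential

/-- The period function
`T(c) = √2 ∫_{a(c)}^{b(c)} du/√(c - G(u))` tends to `π√n` as `c → 0⁺`, where
`0 < a(c) < 1 < b(c)` are determined by `G(a(c)) = G(b(c)) = c`. -/
theorem period_function_limit_at_zero
    (n : ℕ) (hn : 3 ≤ n)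
    (a b : ℝ → ℝ)
    (hab : ∀ c : ℝ, 0 < c → c < 1 / ((n : ℝ) - 2) →
      0 < a c ∧ a c < 1 ∧ 1 < b c ∧ derdzG n (a c) = c ∧ derdzG n (b c) = c) :
    Tendsto (fun c : ℝ => Real.sqrt 2 * ∫ u in a c..b c, 1 / Real.sqrt (c - derdzG n u))
      (nhdsWithin 0 (Set.Ioi 0)) (nhds (π * Real.sqrt (n : ℝ))) := by
  obtain ⟨hn₀, hn₂⟩ : n ≠ 0 ∧ n ≠ 2 := by lia
  have hbound : 0 < 1 / ((n : ℝ) - 2) := one_div_pos.2 (sub_pos.2 (by exact_mod_cast hn))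
  obtain ⟨ha₀, ha₁, hb₁, hGa, hGb⟩ : (∀ᶠ c in 𝓝[>] 0, 0 < a c) ∧ (∀ᶠ c in 𝓝[>] 0, a c < 1) ∧
      (∀ᶠ c in 𝓝[>] 0, 1 < b c) ∧ (∀ᶠ c in 𝓝[>] 0, derdzG n (a c) = c) ∧
      (∀ᶠ c in 𝓝[>] 0, derdzG n (b c) = c) := by
    simp only [← eventually_and]
    filter_upwards [Ioo_mem_nhdsGT hbound] with c hc using hab c hc.1 hc.2
  have hid : Tendsto (fun c : ℝ ↦ c) (𝓝[>] 0) (𝓝 0) := nhdsWithin_le_nhds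
  have ha : Tendsto a (𝓝[>] 0) (𝓝[<] 1) :=
    tendsto_nhdsLT_one_of_tendsto_derdzG hn₀ hn₂ ha₀ ha₁ (hid.congr' (EventuallyEq.symm hGa))
  have hb : Tendsto b (𝓝[>] 0) (𝓝[>] 1) :=
    tendsto_nhdsGT_one_of_tendsto_derdzG hn₀ hn₂ hb₁ (hid.congr' (EventuallyEq.symm hGb))
  have hκ : deriv (deriv (derdzG n)) 1 = 4 / n := deriv_deriv_derdzG_one hn₀ hn₂
  have hperiod : 2 * π / √(4 / n) = π * √n := by
    rw [show (4 : ℝ) = 2 ^ 2 by norm_num, sqrt_div (sq_nonneg 2), sqrt_sq zero_le_two]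
    field_simp
  rw [← hperiod, ← hκ]
  exact tendsto_period_of_deriv_deriv_pos (deriv_derdzG_one hn₀ hn₂) (hκ ▸ by positivity)
    ha hb hGa hGb
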